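/- Let k be an algebraically closed field of characteristic 0. Every homogeneous polynomial f ∈ k[x,y] of degree 4 is GL₂(k)-equivalent to one of the following: (1) 0; (2) x⁴; (3) x³y; (4) x²y²; (5) x⁴ + x²y²; (6) x⁴ + y⁴ + λx²y² for some λ ∈ k with λ ≠ 2 and λ ≠ −2. -/

import Mathlib

open MvPolynomial

/-- `GL₂(k)`-equivalence of polynomials in `k[x,y]`: `f ∼ g` iff `g = σ(f)` for some
`σ = ((α,β),(γ,δ)) ∈ GL₂(k)` acting by `x ↦ αx + βy`, `y ↦ γx + δy`. -/
def glEquiv (k : Type*) [CommRing k] (f g : MvPolynomial (Fin 2) k) : Prop :=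
  ∃ α β γ δ : k, α * δ - β * γ ≠ 0 ∧
    (MvPolynomial.aeval
      ![C α * X 0 + C β * X 1, C γ * X 0 + C δ * X 1] : _ →ₐ[k] _) f = g

/-!
Over an algebraically closed field a quartic form splits off two linear factors; moving them to
coordinate position makes it equivalent to `x²q` or `xyq` with `q` quadratic. In the first case,
completing the square in `q` leads to a normal form. In the second case, rescaling equates the two
outer coefficients of `q` unless one of them vanishes, and a form symmetric in `x` and `y` is even
in terms of `x + y` and `x - y`, so we reach `ax⁴ + cx²y² + ey⁴`. If `ae = 0`, a squared coordinate
factors out. Otherwise the form scales to `x⁴ + y⁴ + λx²y²`, which for `λ = ±2` is the square of a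
nondegenerate quadratic form and hence equivalent to `x²y²`.
-/

section LinearSubstitution

/-- The linear substitution `x ↦ αx + βy`, `y ↦ γx + δy` on `k[x,y]`, so that `glEquiv k f g` says
that `g` is the image of `f` under a substitution with nonzero determinant. -/
noncomputable def linSubst {k : Type*} [CommRing k] (α β γ δ : k) :
    MvPolynomial (Fin 2) k →ₐ[k] MvPolynomial (Fin 2) k :=
  aeval ![C α * X 0 + C β * X 1, C γ * X 0 + C δ * X 1]

section CommRing

variable {k : Type*} [CommRing k]

lemma linSubst_linearForm (α β γ δ u v : k) :
    linSubst α β γ δ (C u * X 0 + C v * X 1) =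
      C (u * α + v * γ) * X 0 + C (u * β + v * δ) * X 1 := by
  simp only [linSubst, map_add, map_mul, algHom_C, algebraMap_eq, aeval_X, Matrix.cons_val_zero,
    Matrix.cons_val_one]
  ring

lemma linSubst_X_zero (α β γ δ : k) : linSubst α β γ δ (X 0) = C α * X 0 + C β * X 1 := by
  simp [linSubst]

lemma linSubst_X_one (α β γ δ : k) : linSubst α β γ δ (X 1) = C γ * X 0 + C δ * X 1 := by
  simp [linSubst]

lemma isHomogeneous_linSubst {f : MvPolynomial (Fin 2) k} {n : ℕ} (hf : f.IsHomogeneous n)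
    (α β γ δ : k) : (linSubst α β γ δ f).IsHomogeneous n := by
  have hlinear (i : Fin 2) : (![C α * X 0 + C β * X 1, C γ * X 0 + C δ * X 1] i :
      MvPolynomial (Fin 2) k).IsHomogeneous 1 := by
    fin_cases i <;> exact (isHomogeneous_C_mul_X _ _).add (isHomogeneous_C_mul_X _ _)
  simpa only [linSubst, one_mul] using hf.aeval _ hlinear

lemma linSubst_comp_linSubst (α β γ δ α' β' γ' δ' : k) :
    (linSubst α' β' γ' δ').comp (linSubst α β γ δ) =
      linSubst (α * α' + β * γ') (α * β' + β * δ') (γ * α' + δ * γ') (γ * β' + δ * δ') := by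
  ext i : 1
  fin_cases i <;> simp [linSubst_X_zero, linSubst_X_one, linSubst_linearForm]

lemma eval_linSubst (α β γ δ u v : k) (f : MvPolynomial (Fin 2) k) :
    eval ![u, v] (linSubst α β γ δ f) = eval ![α * u + β * v, γ * u + δ * v] f := by
  rw [linSubst, map_aeval]
  congr 1
  apply ringHom_ext
  · simp
  · simp [Fin.forall_fin_two]

lemma glEquiv_linSubst (α β γ δ : k) (hdet : α * δ - β * γ ≠ 0) (f : MvPolynomial (Fin 2) k) :
    glEquiv k f (linSubst α β γ δ f) :=
  ⟨α, β, γ, δ, hdet, rfl⟩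

end CommRing

lemma glEquiv.refl {k : Type*} [CommRing k] [Nontrivial k] (f : MvPolynomial (Fin 2) k) :
    glEquiv k f f := by
  have hid : linSubst 1 0 0 1 = AlgHom.id k (MvPolynomial (Fin 2) k) := by
    ext i : 1
    fin_cases i <;> simp [linSubst_X_zero, linSubst_X_one]
  exact ⟨1, 0, 0, 1, by simp, DFunLike.congr_fun hid f⟩

variable {k : Type*} [CommRing k] [IsDomain k]

lemma glEquiv.trans {f g h : MvPolynomial (Fin 2) k} (hfg : glEquiv k f g)
    (hgh : glEquiv k g h) : glEquiv k f h := by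
  obtain ⟨α, β, γ, δ, hdet, rfl⟩ := hfg
  obtain ⟨α', β', γ', δ', hdet', rfl⟩ := hgh
  refine ⟨α * α' + β * γ', α * β' + β * δ', γ * α' + δ * γ', γ * β' + δ * δ', ?_, ?_⟩
  · convert mul_ne_zero hdet hdet' using 1
    ring
  · exact (DFunLike.congr_fun (linSubst_comp_linSubst α β γ δ α' β' γ' δ') f).symm

lemma glEquiv_of_forall_eval_eq [Infinite k] {f g : MvPolynomial (Fin 2) k} (α β γ δ : k)
    (hdet : α * δ - β * γ ≠ 0)
    (heval : ∀ u v, eval ![α * u + β * v, γ * u + δ * v] f = eval ![u, v] g) : glEquiv k f g := by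
  refine ⟨α, β, γ, δ, hdet, MvPolynomial.funext fun p ↦ ?_⟩
  have hp : p = ![p 0, p 1] := by
    funext i
    fin_cases i <;> rfl
  rw [hp]
  exact (eval_linSubst α β γ δ (p 0) (p 1) f).trans (heval (p 0) (p 1))

end LinearSubstitution

section BinaryForm

lemma exists_eq_of_isHomogeneous_two {k : Type*} [CommSemiring k] {q : MvPolynomial (Fin 2) k}
    (hq : q.IsHomogeneous 2) :
    ∃ a b c : k, q = C a * X 0 ^ 2 + C b * X 0 * X 1 + C c * X 1 ^ 2 := by
  set p : Polynomial k := aeval ![Polynomial.X, 1] q with hp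
  refine ⟨p.coeff 2, p.coeff 1, p.coeff 0, ?_⟩
  rw [← Polynomial.homogenize_eq_of_isHomogeneous hq rfl, ← hp, Polynomial.homogenize]
  simp [Finset.Nat.antidiagonal_succ, monomial_eq, Finsupp.prod_fintype, mul_assoc, add_comm]

variable {k : Type*} [Field k]

lemma exists_linearForm_mul_eq [IsAlgClosed k] {f : MvPolynomial (Fin 2) k} {n : ℕ}
    (hf : f.IsHomogeneous (n + 1)) :
    ∃ (u v : k) (g : MvPolynomial (Fin 2) k), (u ≠ 0 ∨ v ≠ 0) ∧ g.IsHomogeneous n ∧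
      f = (C u * X 0 + C v * X 1) * g := by
  set p : Polynomial k := aeval ![Polynomial.X, 1] f
  have hpf : p.homogenize (n + 1) = f := Polynomial.homogenize_eq_of_isHomogeneous hf rfl
  have hdeg : p.natDegree ≤ n + 1 := by
    simpa using aeval_natDegree_le f hf.totalDegree_le ![Polynomial.X, 1] (n := 1)
      (by simp [Fin.forall_fin_two])
  rcases hdeg.lt_or_eq with hlt | heq
  · refine ⟨0, 1, p.homogenize n, by simp, Polynomial.isHomogeneous_homogenize p, ?_⟩
    rw [← hpf, ← mul_one p, Polynomial.homogenize_mul p 1 (Nat.lt_succ_iff.mp hlt) (by simp)]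
    simp [mul_comm]
  · obtain ⟨t, ht⟩ := IsAlgClosed.exists_root p (by
      intro hzero
      simp [Polynomial.natDegree_eq_of_degree_eq_some hzero] at heq)
    obtain ⟨r, hr⟩ := Polynomial.dvd_iff_isRoot.mpr ht
    refine ⟨1, -t, r.homogenize n, by simp, Polynomial.isHomogeneous_homogenize r, ?_⟩
    have hrdeg : r.natDegree ≤ n := by
      have hr0 : r ≠ 0 := by
        rintro rfl
        simp [hr] at heq
      rw [hr, Polynomial.natDegree_mul (Polynomial.X_sub_C_ne_zero t) hr0,
        Polynomial.natDegree_X_sub_C] at hdeg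
      lia
    have hlinear : (Polynomial.X - Polynomial.C t).homogenize 1 = C 1 * X 0 + C (-t) * X 1 := by
      simp [sub_eq_add_neg]
    rw [← hpf, hr, add_comm n 1, Polynomial.homogenize_mul _ _ (by simp) hrdeg, hlinear]

lemma exists_glEquiv_X_zero_mul {u v : k} (huv : u ≠ 0 ∨ v ≠ 0) {n : ℕ}
    {g : MvPolynomial (Fin 2) k} (hg : g.IsHomogeneous n) :
    ∃ h : MvPolynomial (Fin 2) k, h.IsHomogeneous n ∧
      glEquiv k ((C u * X 0 + C v * X 1) * g) (X 0 * h) := by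
  rcases huv with hu | hv
  · refine ⟨linSubst u⁻¹ (-v / u) 0 1 g, isHomogeneous_linSubst hg .., ?_⟩
    convert glEquiv_linSubst u⁻¹ (-v / u) 0 1 (by simp [hu]) _ using 1
    rw [map_mul, linSubst_linearForm]
    simp [hu, mul_div_cancel₀]
  · refine ⟨linSubst 0 1 v⁻¹ (-u / v) g, isHomogeneous_linSubst hg .., ?_⟩
    convert glEquiv_linSubst 0 1 v⁻¹ (-u / v) (by simp [hv]) _ using 1
    rw [map_mul, linSubst_linearForm]
    simp [hv, mul_div_cancel₀]

lemma exists_glEquiv_X_zero_mul_X_one_mul {u v : k} (hv : v ≠ 0) {n : ℕ}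
    {g : MvPolynomial (Fin 2) k} (hg : g.IsHomogeneous n) :
    ∃ h : MvPolynomial (Fin 2) k, h.IsHomogeneous n ∧
      glEquiv k (X 0 * ((C u * X 0 + C v * X 1) * g)) (X 0 * X 1 * h) := by
  refine ⟨linSubst 1 0 (-u / v) v⁻¹ g, isHomogeneous_linSubst hg .., ?_⟩
  convert glEquiv_linSubst 1 0 (-u / v) v⁻¹ (by simp [hv]) _ using 1
  rw [map_mul, map_mul, linSubst_linearForm, linSubst_X_zero]
  simp [hv, mul_div_cancel₀, mul_assoc]

end BinaryForm

section QuarticNormalForm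

lemma exists_ne_zero_mul_pow_eq_one {k : Type*} [Field k] [IsAlgClosed k] {a : k} (ha : a ≠ 0)
    {n : ℕ} (hn : n ≠ 0) : ∃ s : k, s ≠ 0 ∧ a * s ^ n = 1 := by
  obtain ⟨s, hs⟩ := IsAlgClosed.exists_pow_nat_eq a⁻¹ (Nat.pos_of_ne_zero hn)
  refine ⟨s, ?_, by rw [hs, mul_inv_cancel₀ ha]⟩
  rintro rfl
  exact inv_ne_zero ha (by rw [← hs, zero_pow hn])

/-- The representatives in the classification of binary quartic forms up to `glEquiv`. -/
inductive IsQuarticNormalForm {k : Type*} [CommRing k] : MvPolynomial (Fin 2) k → Prop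
  | zero : IsQuarticNormalForm 0
  | quadrupleRoot : IsQuarticNormalForm (X 0 ^ 4)
  | tripleRoot : IsQuarticNormalForm (X 0 ^ 3 * X 1)
  | twoDoubleRoots : IsQuarticNormalForm (X 0 ^ 2 * X 1 ^ 2)
  | oneDoubleRoot : IsQuarticNormalForm (X 0 ^ 4 + X 0 ^ 2 * X 1 ^ 2)
  | simpleRoots (l : k) (hl : l ≠ 2) (hl' : l ≠ -2) :
      IsQuarticNormalForm (X 0 ^ 4 + X 1 ^ 4 + C l * X 0 ^ 2 * X 1 ^ 2)

/-- A polynomial has a quartic normal form if it is `GL₂(k)`-equivalent to one of the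
representatives in `IsQuarticNormalForm`. -/
def HasQuarticNormalForm {k : Type*} [CommRing k] (f : MvPolynomial (Fin 2) k) : Prop :=
  ∃ g, IsQuarticNormalForm g ∧ glEquiv k f g

lemma HasQuarticNormalForm.of_glEquiv {k : Type*} [CommRing k] [IsDomain k]
    {f g : MvPolynomial (Fin 2) k} (hg : HasQuarticNormalForm g) (hfg : glEquiv k f g) :
    HasQuarticNormalForm f :=
  let ⟨h, hh, hgh⟩ := hg
  ⟨h, hh, hfg.trans hgh⟩

variable {k : Type*} [Field k] [IsAlgClosed k]

lemma hasQuarticNormalForm_X_zero_pow_three_mul (a b : k) :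
    HasQuarticNormalForm (X 0 ^ 3 * (C a * X 0 + C b * X 1)) := by
  by_cases hb : b = 0
  · subst hb
    by_cases ha : a = 0
    · refine ⟨0, .zero, ?_⟩
      simpa [ha] using glEquiv.refl (0 : MvPolynomial (Fin 2) k)
    · obtain ⟨s, hs, has⟩ := exists_ne_zero_mul_pow_eq_one ha four_ne_zero
      refine ⟨_, .quadrupleRoot, glEquiv_of_forall_eval_eq s 0 0 1 (by simpa) fun x y ↦ ?_⟩
      simp only [map_add, map_mul, map_pow, eval_X, eval_C, Matrix.cons_val_zero,
        Matrix.cons_val_one]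
      linear_combination x ^ 4 * has
  · refine ⟨_, .tripleRoot, glEquiv_of_forall_eval_eq 1 0 (-a / b) b⁻¹ (by simpa) fun x y ↦ ?_⟩
    have hcancel : a * x + b * (-a / b * x + b⁻¹ * y) = y := by field
    simp [hcancel]

lemma hasQuarticNormalForm_X_zero_sq_mul [NeZero (2 : k)] {q : MvPolynomial (Fin 2) k}
    (hq : q.IsHomogeneous 2) : HasQuarticNormalForm (X 0 ^ 2 * q) := by
  obtain ⟨a, b, c, rfl⟩ := exists_eq_of_isHomogeneous_two hq
  by_cases hc : c = 0
  · convert hasQuarticNormalForm_X_zero_pow_three_mul a b using 1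
    simp only [hc, map_zero]
    ring
  obtain ⟨m, rfl⟩ : ∃ m, b = 2 * c * m :=
    ⟨b / (2 * c), (mul_div_cancel₀ b (mul_ne_zero two_ne_zero hc)).symm⟩
  obtain ⟨d, rfl⟩ : ∃ d, a = d + c * m ^ 2 := ⟨a - c * m ^ 2, (sub_add_cancel a _).symm⟩
  have hsquare (s t x y : k) :
      (s * x) ^ 2 * ((d + c * m ^ 2) * (s * x) ^ 2 + 2 * c * m * (s * x) * (-m * s * x + t * y) +
        c * (-m * s * x + t * y) ^ 2) =
      d * s ^ 4 * x ^ 4 + c * s ^ 2 * t ^ 2 * x ^ 2 * y ^ 2 := by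
    ring
  by_cases hd : d = 0
  · obtain ⟨t, ht, hct⟩ := exists_ne_zero_mul_pow_eq_one hc two_ne_zero
    refine ⟨_, .twoDoubleRoots, glEquiv_of_forall_eval_eq 1 0 (-m) t (by simpa) fun x y ↦ ?_⟩
    simpa [hd, hct] using hsquare 1 t x y
  · obtain ⟨s, hs, hds⟩ := exists_ne_zero_mul_pow_eq_one hd four_ne_zero
    obtain ⟨t, ht, hct⟩ :=
      exists_ne_zero_mul_pow_eq_one (mul_ne_zero hc (pow_ne_zero 2 hs)) two_ne_zero
    refine ⟨_, .oneDoubleRoot,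
      glEquiv_of_forall_eval_eq s 0 (-m * s) t (by simp [hs, ht]) fun x y ↦ ?_⟩
    simpa [hds, hct] using hsquare s t x y

lemma hasQuarticNormalForm_X_one_sq_mul [NeZero (2 : k)] {q : MvPolynomial (Fin 2) k}
    (hq : q.IsHomogeneous 2) : HasQuarticNormalForm (X 1 ^ 2 * q) := by
  refine (hasQuarticNormalForm_X_zero_sq_mul (isHomogeneous_linSubst hq 0 1 1 0)).of_glEquiv ?_
  convert glEquiv_linSubst (0 : k) 1 1 0 (by simp) _ using 1
  simp [linSubst_X_one]

lemma glEquiv_X_zero_sq_mul_X_one_sq_of_sq_eq_four [NeZero (2 : k)] {l : k} (hl : l ^ 2 = 4) :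
    glEquiv k (X 0 ^ 4 + X 1 ^ 4 + C l * X 0 ^ 2 * X 1 ^ 2) (X 0 ^ 2 * X 1 ^ 2) := by
  have h2 : (2 : k) ≠ 0 := two_ne_zero
  obtain ⟨s, hs⟩ := IsAlgClosed.exists_pow_nat_eq (-l / 2) two_pos
  obtain rfl : l = -2 * s ^ 2 := by
    rw [hs]
    field
  have hs4 : s ^ 4 = 1 := by
    apply mul_left_cancel₀ (pow_ne_zero 2 h2)
    linear_combination hl
  have hs0 : s ≠ 0 := (pow_ne_zero_iff four_ne_zero).mp (hs4 ▸ one_ne_zero)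
  -- The form is `(x² - s²y²)²`; the substitution sends `x - sy` to `y` and `x + sy` to `x`.
  refine glEquiv_of_forall_eval_eq (1 / 2) (1 / 2) (1 / (2 * s)) (-1 / (2 * s)) ?_ fun x y ↦ ?_
  · have hdet : 1 / 2 * (-1 / (2 * s)) - 1 / 2 * (1 / (2 * s)) = -(2 * s)⁻¹ := by field
    rw [hdet]
    exact neg_ne_zero.mpr (inv_ne_zero (mul_ne_zero h2 hs0))
  · simp only [map_add, map_mul, map_pow, eval_X, eval_C, Matrix.cons_val_zero, Matrix.cons_val_one]
    field_simp
    linear_combination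
      ((x + y) ^ 4 - 2 * (x + y) ^ 2 * (x - y) ^ 2 - 16 * x ^ 2 * y ^ 2) * hs4

lemma hasQuarticNormalForm_even [NeZero (2 : k)] (a c e : k) :
    HasQuarticNormalForm (C a * X 0 ^ 4 + C c * X 0 ^ 2 * X 1 ^ 2 + C e * X 1 ^ 4) := by
  by_cases he : e = 0
  · convert hasQuarticNormalForm_X_zero_sq_mul
      ((isHomogeneous_C_mul_X_pow a 0 2).add (isHomogeneous_C_mul_X_pow c 1 2)) using 1
    simp only [he, map_zero]
    ring
  by_cases ha : a = 0
  · convert hasQuarticNormalForm_X_one_sq_mul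
      ((isHomogeneous_C_mul_X_pow c 0 2).add (isHomogeneous_C_mul_X_pow e 1 2)) using 1
    simp only [ha, map_zero]
    ring
  obtain ⟨s, hs, has⟩ := exists_ne_zero_mul_pow_eq_one ha four_ne_zero
  obtain ⟨t, ht, het⟩ := exists_ne_zero_mul_pow_eq_one he four_ne_zero
  have hscale : glEquiv k (C a * X 0 ^ 4 + C c * X 0 ^ 2 * X 1 ^ 2 + C e * X 1 ^ 4)
      (X 0 ^ 4 + X 1 ^ 4 + C (c * s ^ 2 * t ^ 2) * X 0 ^ 2 * X 1 ^ 2) := by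
    refine glEquiv_of_forall_eval_eq s 0 0 t (by simp [hs, ht]) fun x y ↦ ?_
    simp only [map_add, map_mul, map_pow, eval_X, eval_C, Matrix.cons_val_zero, Matrix.cons_val_one]
    linear_combination x ^ 4 * has + y ^ 4 * het
  by_cases hl : (c * s ^ 2 * t ^ 2) ^ 2 = 4
  · exact ⟨_, .twoDoubleRoots, hscale.trans (glEquiv_X_zero_sq_mul_X_one_sq_of_sq_eq_four hl)⟩
  · refine ⟨_, .simpleRoots _ (fun h ↦ hl ?_) (fun h ↦ hl ?_), hscale⟩ <;> norm_num [h]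

lemma hasQuarticNormalForm_X_zero_mul_X_one_mul [NeZero (2 : k)] {q : MvPolynomial (Fin 2) k}
    (hq : q.IsHomogeneous 2) : HasQuarticNormalForm (X 0 * X 1 * q) := by
  obtain ⟨a, b, c, rfl⟩ := exists_eq_of_isHomogeneous_two hq
  by_cases hc : c = 0
  · convert hasQuarticNormalForm_X_zero_sq_mul (q := X 1 * (C a * X 0 + C b * X 1)) ?_ using 1
    · simp only [hc, map_zero]
      ring
    · exact (isHomogeneous_X k 1).mul
        ((isHomogeneous_C_mul_X a 0).add (isHomogeneous_C_mul_X b 1))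
  by_cases ha : a = 0
  · convert hasQuarticNormalForm_X_one_sq_mul (q := X 0 * (C b * X 0 + C c * X 1)) ?_ using 1
    · simp only [ha, map_zero]
      ring
    · exact (isHomogeneous_X k 0).mul
        ((isHomogeneous_C_mul_X b 0).add (isHomogeneous_C_mul_X c 1))
  -- Rescaling by `s` equates the outer coefficients of `q`, so the form becomes symmetric in `x`
  -- and `y`, hence even in terms of `x + y` and `x - y`.
  obtain ⟨s, hs⟩ := IsAlgClosed.exists_pow_nat_eq (c / a) two_pos
  have hs0 : s ≠ 0 := (pow_ne_zero_iff two_ne_zero).mp (hs ▸ div_ne_zero hc ha)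
  obtain rfl : c = a * s ^ 2 := by
    rw [hs, mul_div_cancel₀ c ha]
  refine (hasQuarticNormalForm_even (a * s ^ 3 * 2 + b * s ^ 2) (-2 * b * s ^ 2)
    (-2 * a * s ^ 3 + b * s ^ 2)).of_glEquiv
    (glEquiv_of_forall_eval_eq s s 1 (-1) ?_ fun x y ↦ ?_)
  · convert mul_ne_zero (neg_ne_zero.mpr (two_ne_zero (α := k))) hs0 using 1
    ring
  · simp only [map_add, map_mul, map_pow, eval_X, eval_C, Matrix.cons_val_zero, Matrix.cons_val_one]
    ring

lemma hasQuarticNormalForm_of_isHomogeneous [NeZero (2 : k)] {f : MvPolynomial (Fin 2) k}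
    (hf : f.IsHomogeneous 4) : HasQuarticNormalForm f := by
  obtain ⟨u, v, g, huv, hg, rfl⟩ := exists_linearForm_mul_eq hf
  obtain ⟨g, hg, hfg⟩ := exists_glEquiv_X_zero_mul huv hg
  obtain ⟨u, v, q, -, hq, rfl⟩ := exists_linearForm_mul_eq hg
  refine HasQuarticNormalForm.of_glEquiv ?_ hfg
  by_cases hv : v = 0
  · convert hasQuarticNormalForm_X_zero_sq_mul (hq.C_mul u) using 1
    simp only [hv, map_zero]
    ring
  · obtain ⟨r, hr, hqr⟩ := exists_glEquiv_X_zero_mul_X_one_mul hv hq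
    exact (hasQuarticNormalForm_X_zero_mul_X_one_mul hr).of_glEquiv hqr

end QuarticNormalForm

theorem statement7_general (k : Type*) [Field k] [IsAlgClosed k] [NeZero (2 : k)]
    (f : MvPolynomial (Fin 2) k) (hf : f.IsHomogeneous 4) :
    glEquiv k f 0 ∨
    glEquiv k f (X 0 ^ 4) ∨
    glEquiv k f (X 0 ^ 3 * X 1) ∨
    glEquiv k f (X 0 ^ 2 * X 1 ^ 2) ∨
    glEquiv k f (X 0 ^ 4 + X 0 ^ 2 * X 1 ^ 2) ∨
    ∃ l : k, l ≠ 2 ∧ l ≠ -2 ∧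
      glEquiv k f (X 0 ^ 4 + X 1 ^ 4 + C l * X 0 ^ 2 * X 1 ^ 2) := by
  obtain ⟨g, hg, hfg⟩ := hasQuarticNormalForm_of_isHomogeneous hf
  cases hg with
  | zero => exact .inl hfg
  | quadrupleRoot => exact .inr (.inl hfg)
  | tripleRoot => exact .inr (.inr (.inl hfg))
  | twoDoubleRoots => exact .inr (.inr (.inr (.inl hfg)))
  | oneDoubleRoot => exact .inr (.inr (.inr (.inr (.inl hfg))))
  | simpleRoots l hl hl' => exact .inr (.inr (.inr (.inr (.inr ⟨l, hl, hl', hfg⟩))))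

/-- over an algebraically closed field of characteristic 0, every
binary quartic form is `GL₂(k)`-equivalent to `0`, `x⁴`, `x³y`, `x²y²`,
`x⁴ + x²y²`, or `x⁴ + y⁴ + λx²y²` with `λ ≠ ±2`. -/
theorem statement7 (k : Type*) [Field k] [IsAlgClosed k] [CharZero k]
    (f : MvPolynomial (Fin 2) k) (hf : f.IsHomogeneous 4) :
    glEquiv k f 0 ∨
    glEquiv k f (X 0 ^ 4) ∨
    glEquiv k f (X 0 ^ 3 * X 1) ∨
    glEquiv k f (X 0 ^ 2 * X 1 ^ 2) ∨
    glEquiv k f (X 0 ^ 4 + X 0 ^ 2 * X 1 ^ 2) ∨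
    ∃ l : k, l ≠ 2 ∧ l ≠ -2 ∧
      glEquiv k f (X 0 ^ 4 + X 1 ^ 4 + C l * X 0 ^ 2 * X 1 ^ 2) := by
  exact statement7_general k f hf
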